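/- Let d ≥ 1 and τ > 0. The uniform measure σ_d is the unique Borel probability measure on S^d minimizing the functional μ ↦ ∫_{S^d} log( ∫_{S^d} e^{u·v/τ} dμ(v) ) dμ(u): for every Borel probability measure μ on S^d, this functional at μ is at least its value at σ_d, with equality if and only if μ = σ_d (as measures on the Borel subsets of S^d). -/

import Mathlib

open MeasureTheory Real Filter Metric
open scoped RealInnerProductSpace ENNReal Topology BigOperators

noncomputable section

/-- `ℝ^n` as a Euclidean space. -/
abbrev Euc (n : ℕ) : Type := EuclideanSpace ℝ (Fin n)

/-- The unit sphere in `ℝ^m`; the sphere `S^d` of the informal statement is `Sph (d+1)`. -/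
abbrev Sph (m : ℕ) := Metric.sphere (0 : Euc m) 1

/-- The uniform (normalized surface-area) probability measure on the unit sphere of `ℝ^m`. -/
noncomputable def unifSphere (m : ℕ) : Measure (Sph m) :=
  ((volume : Measure (Euc m)).toSphere Set.univ)⁻¹ • (volume : Measure (Euc m)).toSphere

/-- The functional `μ ↦ ∫ log(∫ e^{u·v/τ} dμ(v)) dμ(u)` on measures on the sphere in `ℝ^m`. -/
noncomputable def logPotFunctional (τ : ℝ) {m : ℕ} (μ : Measure (Sph m)) : ℝ :=
  ∫ u, Real.log (∫ v, Real.exp (⟪(u : Euc m), (v : Euc m)⟫ / τ) ∂μ) ∂μ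

/-!
Write `K(u, v) = e^{u·v/τ}`, let `U` be the potential of `μ`, and let `c` be the potential of the
uniform measure `σ`, a constant by rotation invariance. Let `ν = U⁻¹ dμ`, of mass `t = ∫ U⁻¹ dμ`.
Positive definiteness of `K`, applied to `ν - t σ`, bounds the energy of `ν` below by `c t²`, and
the Schur test bounds it above by `∫ U · U⁻² dμ = t`; hence `c t ≤ 1`. Integrating
`log c - log U ≤ c U⁻¹ - 1` now gives `log c ≤ ∫ log U dμ`. In case of equality `U = c` holds
`μ`-almost everywhere, so `μ` has the same energy `c` as `σ`, and strict positive definiteness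
forces `μ = σ`.

Strict positive definiteness comes from the Fourier side: on the sphere `K` is a multiple of a
Gaussian kernel, that is, of the characteristic function of a Gaussian measure `γ` at `u - v` after
rescaling, and for such a kernel the energy of `α - β` is the squared `L²(γ)` distance between the
characteristic functions of `α` and `β`.
-/

section Kernels

variable {X Y : Type*} [MeasurableSpace X] [MeasurableSpace Y]

/-- The potential `U(u) = ∫ K(u, v) dμ(v)` of the measure `μ` for the kernel `K`. -/
def kernelPotential (K : X → X → ℝ) (μ : Measure X) (u : X) : ℝ := ∫ v, K u v ∂μ

/-- The mutual energy `∬ K(u, v) dβ(v) dα(u)` of two measures for the kernel `K`. -/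
def mutualEnergy (K : X → X → ℝ) (α β : Measure X) : ℝ := ∫ u, kernelPotential K β u ∂α

/-- The energy of the signed measure `α - β` for a symmetric kernel `K`, expanded so that only
positive measures occur (in statistics, the squared maximum mean discrepancy). -/
def energyDistSq (K : X → X → ℝ) (α β : Measure X) : ℝ :=
  mutualEnergy K α α - 2 * mutualEnergy K α β + mutualEnergy K β β

/-- Integral strict positive definiteness: nonzero signed measures, written as differences of
finite positive measures, have positive energy. Meant for bounded measurable kernels, for which all
the energies are honest integrals. -/
def IsStrictlyPosDefKernel (K : X → X → ℝ) : Prop :=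
  ∀ (α β : Measure X) [IsFiniteMeasure α] [IsFiniteMeasure β],
    0 ≤ energyDistSq K α β ∧ (energyDistSq K α β = 0 → α = β)

lemma energyDistSq_const_mul (a : ℝ) (K : X → X → ℝ) (α β : Measure X) :
    energyDistSq (fun u v => a * K u v) α β = a * energyDistSq K α β := by
  simp only [energyDistSq, mutualEnergy, kernelPotential, integral_const_mul]
  ring

lemma energyDistSq_comp_measurableEmbedding {f : X → Y} (hf : MeasurableEmbedding f)
    (K : Y → Y → ℝ) (α β : Measure X) :
    energyDistSq (fun u v => K (f u) (f v)) α β = energyDistSq K (α.map f) (β.map f) := by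
  simp only [energyDistSq, mutualEnergy, kernelPotential, hf.integral_map]

lemma IsStrictlyPosDefKernel.const_mul {K : X → X → ℝ} (hK : IsStrictlyPosDefKernel K) {a : ℝ}
    (ha : 0 < a) : IsStrictlyPosDefKernel fun u v => a * K u v := by
  intro α β _ _
  rw [energyDistSq_const_mul]
  exact ⟨mul_nonneg ha.le (hK α β).1,
    fun h => (hK α β).2 ((mul_eq_zero.mp h).resolve_left ha.ne')⟩

lemma IsStrictlyPosDefKernel.comp_measurableEmbedding {K : Y → Y → ℝ}
    (hK : IsStrictlyPosDefKernel K) {f : X → Y} (hf : MeasurableEmbedding f) :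
    IsStrictlyPosDefKernel fun u v => K (f u) (f v) := by
  intro α β _ _
  rw [energyDistSq_comp_measurableEmbedding hf]
  exact ⟨(hK _ _).1, fun h => hf.map_injective ((hK _ _).2 h)⟩

lemma measurable_kernelPotential {K : X → X → ℝ} (hK : Measurable (Function.uncurry K))
    (μ : Measure X) [SFinite μ] : Measurable (kernelPotential K μ) :=
  hK.stronglyMeasurable.integral_prod_right.measurable

-- The Schur test: `f u * f v` is at most `(f u ^ 2 + f v ^ 2) / 2`, and by symmetry of `K` both
-- squares contribute the same.
lemma integral_integral_kernel_mul_mul_le {K : X → X → ℝ} (hK : Measurable (Function.uncurry K))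
    (hsymm : ∀ u v, K u v = K v u) (hnonneg : ∀ u v, 0 ≤ K u v) {μ : Measure X} [SFinite μ]
    {f : X → ℝ} (hf : Measurable f)
    (hint : Integrable (fun p : X × X => K p.1 p.2 * f p.1 ^ 2) (μ.prod μ)) :
    ∫ u, ∫ v, K u v * (f u * f v) ∂μ ∂μ ≤ ∫ u, kernelPotential K μ u * f u ^ 2 ∂μ := by
  have hint_snd : Integrable (fun p : X × X => K p.1 p.2 * f p.2 ^ 2) (μ.prod μ) :=
    hint.swap.congr (ae_of_all _ fun p => by simp [hsymm p.2 p.1])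
  have hmean := (hint.add hint_snd).div_const 2
  have hint_mul : Integrable (fun p : X × X => K p.1 p.2 * (f p.1 * f p.2)) (μ.prod μ) := by
    refine hmean.mono' (by fun_prop) (ae_of_all _ fun p => ?_)
    rw [norm_mul, norm_of_nonneg (hnonneg p.1 p.2), norm_mul, norm_eq_abs, norm_eq_abs,
      Pi.add_apply, ← mul_add, mul_div_assoc, ← sq_abs (f p.1), ← sq_abs (f p.2)]
    gcongr
    · exact hnonneg p.1 p.2
    · linarith [two_mul_le_add_sq |f p.1| |f p.2|]
  have hfst : ∫ u, ∫ v, K u v * f u ^ 2 ∂μ ∂μ = ∫ u, kernelPotential K μ u * f u ^ 2 ∂μ := by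
    simp only [integral_mul_const, kernelPotential]
  have hsnd : ∫ u, ∫ v, K u v * f v ^ 2 ∂μ ∂μ = ∫ u, kernelPotential K μ u * f u ^ 2 ∂μ := by
    rw [integral_integral_swap hint_snd, ← hfst]
    simp only [fun u v => hsymm v u]
  calc ∫ u, ∫ v, K u v * (f u * f v) ∂μ ∂μ
      = ∫ p, K p.1 p.2 * (f p.1 * f p.2) ∂μ.prod μ := integral_integral hint_mul
    _ ≤ ∫ p, (K p.1 p.2 * f p.1 ^ 2 + K p.1 p.2 * f p.2 ^ 2) / 2 ∂μ.prod μ := by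
        refine integral_mono hint_mul hmean fun p => ?_
        linear_combination mul_nonneg (hnonneg p.1 p.2) (sq_nonneg (f p.1 - f p.2)) / 2
    _ = (∫ u, ∫ v, K u v * f u ^ 2 ∂μ ∂μ + ∫ u, ∫ v, K u v * f v ^ 2 ∂μ ∂μ) / 2 := by
        rw [integral_div, integral_add hint hint_snd, integral_integral hint,
          integral_integral hint_snd]
    _ = ∫ u, kernelPotential K μ u * f u ^ 2 ∂μ := by
        rw [hfst, hsnd, add_self_div_two]

section ConstantPotential

variable {K : X → X → ℝ} {σ : Measure X} {c : ℝ}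

lemma mutualEnergy_smul_of_potential_eq_const (hσ : ∀ u, kernelPotential K σ u = c)
    (α : Measure X) (t : ℝ≥0∞) :
    mutualEnergy K α (t • σ) = t.toReal * c * α.real Set.univ := by
  have hpot : ∀ u, kernelPotential K (t • σ) u = t.toReal * c := fun u => by
    rw [← hσ u, kernelPotential, integral_smul_measure, smul_eq_mul, kernelPotential]
  simp only [mutualEnergy, hpot, integral_const, smul_eq_mul]
  ring

lemma energyDistSq_measure_univ_smul [IsProbabilityMeasure σ]
    (hσ : ∀ u, kernelPotential K σ u = c) (α : Measure X) :
    energyDistSq K α (α Set.univ • σ) =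
      mutualEnergy K α α - c * α.real Set.univ ^ 2 := by
  rw [energyDistSq, mutualEnergy_smul_of_potential_eq_const hσ,
    mutualEnergy_smul_of_potential_eq_const hσ, measureReal_ennreal_smul_apply,
    probReal_univ (μ := σ), ← measureReal_def]
  ring

lemma IsStrictlyPosDefKernel.mul_sq_le_mutualEnergy (hK : IsStrictlyPosDefKernel K)
    [IsProbabilityMeasure σ] (hσ : ∀ u, kernelPotential K σ u = c)
    (α : Measure X) [IsFiniteMeasure α] :
    c * α.real Set.univ ^ 2 ≤ mutualEnergy K α α := by
  have : IsFiniteMeasure (α Set.univ • σ) := σ.smul_finite (measure_ne_top α _)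
  have hnonneg := (hK α (α Set.univ • σ)).1
  rw [energyDistSq_measure_univ_smul hσ] at hnonneg
  linarith

lemma IsStrictlyPosDefKernel.eq_of_mutualEnergy_eq (hK : IsStrictlyPosDefKernel K)
    [IsProbabilityMeasure σ] (hσ : ∀ u, kernelPotential K σ u = c)
    {μ : Measure X} [IsProbabilityMeasure μ] (hμ : mutualEnergy K μ μ = c) : μ = σ := by
  have henergy := energyDistSq_measure_univ_smul hσ μ
  rw [hμ, probReal_univ, measure_univ, one_smul] at henergy
  exact (hK μ σ).2 (by rw [henergy]; ring)

end ConstantPotential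

/-- A symmetric measurable kernel pinched between the positive constants `m` and `M`, so that the
potentials of probability measures are bounded and bounded away from zero. -/
structure IsPinchedKernel (K : X → X → ℝ) (m M : ℝ) : Prop where
  measurable : Measurable (Function.uncurry K)
  symm : ∀ u v, K u v = K v u
  lower_pos : 0 < m
  lower_le : ∀ u v, m ≤ K u v
  le_upper : ∀ u v, K u v ≤ M

/-- The measure `U⁻¹ dμ`, where `U` is the potential of `μ`: the test measure whose energy is
compared with its mass. -/
def invPotentialMeasure (K : X → X → ℝ) (μ : Measure X) : Measure X :=
  μ.withDensity fun u => ENNReal.ofReal (kernelPotential K μ u)⁻¹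

namespace IsPinchedKernel

variable {K : X → X → ℝ} {m M : ℝ} (hK : IsPinchedKernel K m M)
include hK

lemma nonneg (u v : X) : 0 ≤ K u v := hK.lower_pos.le.trans (hK.lower_le u v)

lemma norm_le (u v : X) : ‖K u v‖ ≤ M := by
  rw [norm_of_nonneg (hK.nonneg u v)]
  exact hK.le_upper u v

lemma integrable_right (μ : Measure X) [IsFiniteMeasure μ] (u : X) : Integrable (K u) μ :=
  .of_bound (hK.measurable.comp measurable_prodMk_left).aestronglyMeasurable M
    (ae_of_all _ (hK.norm_le u))

variable (μ : Measure X) [IsProbabilityMeasure μ]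

lemma lower_le_kernelPotential (u : X) : m ≤ kernelPotential K μ u := by
  rw [kernelPotential]
  simpa using integral_mono (integrable_const m) (hK.integrable_right μ u) (hK.lower_le u)

lemma kernelPotential_le_upper (u : X) : kernelPotential K μ u ≤ M := by
  rw [kernelPotential]
  simpa using integral_mono (hK.integrable_right μ u) (integrable_const M) (hK.le_upper u)

lemma kernelPotential_pos (u : X) : 0 < kernelPotential K μ u :=
  hK.lower_pos.trans_le (hK.lower_le_kernelPotential μ u)

lemma norm_inv_kernelPotential_le (u : X) : ‖(kernelPotential K μ u)⁻¹‖ ≤ m⁻¹ := by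
  rw [norm_of_nonneg (inv_nonneg.mpr (hK.kernelPotential_pos μ u).le)]
  exact inv_anti₀ hK.lower_pos (hK.lower_le_kernelPotential μ u)

lemma integrable_inv_kernelPotential : Integrable (fun u => (kernelPotential K μ u)⁻¹) μ :=
  .of_bound (measurable_kernelPotential hK.measurable μ).inv.aestronglyMeasurable m⁻¹
    (ae_of_all _ (hK.norm_inv_kernelPotential_le μ))

lemma integrable_log_kernelPotential : Integrable (fun u => log (kernelPotential K μ u)) μ :=
  .of_mem_Icc (log m) (log M) (measurable_kernelPotential hK.measurable μ).log.aemeasurable <|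
    ae_of_all _ fun u => ⟨log_le_log hK.lower_pos (hK.lower_le_kernelPotential μ u),
      log_le_log (hK.kernelPotential_pos μ u) (hK.kernelPotential_le_upper μ u)⟩

lemma integral_invPotentialMeasure (f : X → ℝ) :
    ∫ u, f u ∂invPotentialMeasure K μ = ∫ u, (kernelPotential K μ u)⁻¹ * f u ∂μ := by
  have hdensity : Measurable fun u => ENNReal.ofReal (kernelPotential K μ u)⁻¹ :=
    (measurable_kernelPotential hK.measurable μ).inv.ennreal_ofReal
  rw [invPotentialMeasure, integral_withDensity_eq_integral_toReal_smul hdensity (by simp)]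
  simp only [ENNReal.toReal_ofReal (inv_nonneg.mpr (hK.kernelPotential_pos μ _).le), smul_eq_mul]

lemma isFiniteMeasure_invPotentialMeasure : IsFiniteMeasure (invPotentialMeasure K μ) :=
  isFiniteMeasure_withDensity_ofReal (hK.integrable_inv_kernelPotential μ).hasFiniteIntegral

lemma measureReal_univ_invPotentialMeasure :
    (invPotentialMeasure K μ).real Set.univ = ∫ u, (kernelPotential K μ u)⁻¹ ∂μ := by
  simpa using hK.integral_invPotentialMeasure μ fun _ => 1

lemma mutualEnergy_invPotentialMeasure_le :
    mutualEnergy K (invPotentialMeasure K μ) (invPotentialMeasure K μ) ≤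
      ∫ u, (kernelPotential K μ u)⁻¹ ∂μ := by
  have hmeas : Measurable fun u => (kernelPotential K μ u)⁻¹ :=
    (measurable_kernelPotential hK.measurable μ).inv
  have hint : Integrable (fun p : X × X => K p.1 p.2 * (kernelPotential K μ p.1)⁻¹ ^ 2)
      (μ.prod μ) := by
    have hprod := hK.measurable.mul ((hmeas.comp measurable_fst).pow_const 2)
    refine .of_bound hprod.aestronglyMeasurable (M * m⁻¹ ^ 2) (ae_of_all _ fun p => ?_)
    rw [norm_mul, norm_pow]
    gcongr
    · exact (norm_nonneg _).trans (hK.norm_le p.1 p.2)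
    · exact hK.norm_le p.1 p.2
    · exact hK.norm_inv_kernelPotential_le μ p.1
  calc mutualEnergy K (invPotentialMeasure K μ) (invPotentialMeasure K μ)
      = ∫ u, ∫ v, K u v * ((kernelPotential K μ u)⁻¹ * (kernelPotential K μ v)⁻¹) ∂μ ∂μ := by
        simp only [mutualEnergy, kernelPotential.eq_1 K (invPotentialMeasure K μ),
          hK.integral_invPotentialMeasure, ← integral_const_mul]
        congr! 4
        ring
    _ ≤ ∫ u, kernelPotential K μ u * (kernelPotential K μ u)⁻¹ ^ 2 ∂μ :=
        integral_integral_kernel_mul_mul_le hK.measurable hK.symm hK.nonneg hmeas hint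
    _ = ∫ u, (kernelPotential K μ u)⁻¹ ∂μ := by
        congr! 2 with u
        field_simp [(hK.kernelPotential_pos μ u).ne']

variable {σ : Measure X} [IsProbabilityMeasure σ] {c : ℝ}

lemma pos_of_potential_eq_const (hσ : ∀ u, kernelPotential K σ u = c) : 0 < c := by
  obtain ⟨u⟩ : Nonempty X := σ.nonempty_of_neZero
  exact hσ u ▸ hK.kernelPotential_pos σ u

lemma integral_mul_inv_sub_one_sub_log_kernelPotential (c : ℝ) :
    ∫ u, (c * (kernelPotential K μ u)⁻¹ - 1 - (log c - log (kernelPotential K μ u))) ∂μ =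
      c * ∫ u, (kernelPotential K μ u)⁻¹ ∂μ - 1 -
        (log c - ∫ u, log (kernelPotential K μ u) ∂μ) := by
  have hinv := (hK.integrable_inv_kernelPotential μ).const_mul c
  have hlog := hK.integrable_log_kernelPotential μ
  rw [integral_sub (by fun_prop) (by fun_prop), integral_sub hinv (by fun_prop),
    integral_sub (by fun_prop) hlog, integral_const_mul]
  simp

lemma log_sub_log_kernelPotential_le (hc : 0 < c) (u : X) :
    log c - log (kernelPotential K μ u) ≤ c * (kernelPotential K μ u)⁻¹ - 1 := by
  have hU := hK.kernelPotential_pos μ u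
  rw [← log_div hc.ne' hU.ne', div_eq_mul_inv]
  exact log_le_sub_one_of_pos (by positivity)

lemma kernelPotential_eq_of_log_sub_log_eq (hc : 0 < c) {u : X}
    (hu : c * (kernelPotential K μ u)⁻¹ - 1 = log c - log (kernelPotential K μ u)) :
    kernelPotential K μ u = c := by
  have hU := hK.kernelPotential_pos μ u
  by_contra hne
  have hratio : c / kernelPotential K μ u ≠ 1 := fun h => hne ((div_eq_one_iff_eq hU.ne').mp h).symm
  have hlt := log_lt_sub_one_of_pos (div_pos hc hU) hratio
  rw [log_div hc.ne' hU.ne', div_eq_mul_inv] at hlt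
  linarith

variable (hpd : IsStrictlyPosDefKernel K) (hσ : ∀ u, kernelPotential K σ u = c)
include hpd hσ

lemma mul_integral_inv_kernelPotential_le_one : c * ∫ u, (kernelPotential K μ u)⁻¹ ∂μ ≤ 1 := by
  have := hK.isFiniteMeasure_invPotentialMeasure μ
  have hc := hK.pos_of_potential_eq_const hσ
  set t := ∫ u, (kernelPotential K μ u)⁻¹ ∂μ
  have hquad : c * t ^ 2 ≤ t :=
    calc c * t ^ 2 = c * (invPotentialMeasure K μ).real Set.univ ^ 2 := by
          rw [hK.measureReal_univ_invPotentialMeasure μ]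
      _ ≤ mutualEnergy K (invPotentialMeasure K μ) (invPotentialMeasure K μ) :=
          hpd.mul_sq_le_mutualEnergy hσ _
      _ ≤ t := hK.mutualEnergy_invPotentialMeasure_le μ
  nlinarith

lemma log_le_integral_log_kernelPotential : log c ≤ ∫ u, log (kernelPotential K μ u) ∂μ := by
  have hc := hK.pos_of_potential_eq_const hσ
  have hgap := integral_nonneg (μ := μ) fun u =>
    sub_nonneg.mpr (hK.log_sub_log_kernelPotential_le μ hc u)
  rw [hK.integral_mul_inv_sub_one_sub_log_kernelPotential μ c] at hgap
  linarith [hK.mul_integral_inv_kernelPotential_le_one μ hpd hσ]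

lemma eq_of_integral_log_kernelPotential_eq
    (hμ : ∫ u, log (kernelPotential K μ u) ∂μ = log c) : μ = σ := by
  have hc := hK.pos_of_potential_eq_const hσ
  have hgap_nonneg : ∀ u, 0 ≤ c * (kernelPotential K μ u)⁻¹ - 1 -
      (log c - log (kernelPotential K μ u)) := fun u =>
    sub_nonneg.mpr (hK.log_sub_log_kernelPotential_le μ hc u)
  have hgap_int := hK.integral_mul_inv_sub_one_sub_log_kernelPotential μ c
  have hgap_zero : ∫ u, (c * (kernelPotential K μ u)⁻¹ - 1 -
      (log c - log (kernelPotential K μ u))) ∂μ = 0 :=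
    le_antisymm (by linarith [hK.mul_integral_inv_kernelPotential_le_one μ hpd hσ])
      (integral_nonneg hgap_nonneg)
  have hinv := hK.integrable_inv_kernelPotential μ
  have hlog := hK.integrable_log_kernelPotential μ
  have hconst : ∀ᵐ u ∂μ, kernelPotential K μ u = c := by
    filter_upwards [(integral_eq_zero_iff_of_nonneg hgap_nonneg (by fun_prop)).mp hgap_zero]
      with u hu
    exact hK.kernelPotential_eq_of_log_sub_log_eq μ hc (sub_eq_zero.mp hu)
  refine hpd.eq_of_mutualEnergy_eq hσ ?_
  rw [mutualEnergy, integral_congr_ae hconst, integral_const, probReal_univ, one_smul]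

end IsPinchedKernel

end Kernels

section CharacteristicFunctions

variable {E : Type*} [NormedAddCommGroup E] [InnerProductSpace ℝ E] [MeasurableSpace E]
  [BorelSpace E] [SecondCountableTopology E]

lemma integrable_charFun {α γ : Measure E} [IsFiniteMeasure α] [IsFiniteMeasure γ] :
    Integrable (charFun α) γ :=
  .of_bound stronglyMeasurable_charFun.aestronglyMeasurable _ (ae_of_all _ norm_charFun_le)

lemma integral_charFun_comm (α γ : Measure E) [IsFiniteMeasure α] [IsFiniteMeasure γ] :
    ∫ x, charFun γ x ∂α = ∫ t, charFun α t ∂γ := by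
  simp only [charFun_apply]
  rw [integral_integral_swap]
  · simp only [real_inner_comm]
  · exact .of_bound (Continuous.aestronglyMeasurable (by unfold Function.uncurry; fun_prop)) 1
      (ae_of_all _ fun p => (Complex.norm_exp_ofReal_mul_I _).le)

lemma charFun_conv_map_neg (α β : Measure E) [IsFiniteMeasure α] [IsFiniteMeasure β] (t : E) :
    charFun (α ∗ β.map fun x => -x) t = charFun α t * star (charFun β t) := by
  have := charFun_map_smul (μ := β) (-1) t
  simp only [neg_one_smul, charFun_neg] at this
  rw [charFun_conv, this]
  rfl

lemma mutualEnergy_re_charFun_sub (γ α β : Measure E) [IsFiniteMeasure γ] [IsFiniteMeasure α]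
    [IsFiniteMeasure β] :
    mutualEnergy (fun u v => (charFun γ (u - v)).re) α β =
      ∫ t, (charFun α t * star (charFun β t)).re ∂γ := by
  have hint : Integrable (fun x => (charFun γ x).re) (α ∗ β.map fun x => -x) :=
    integrable_charFun.re
  have hre : ∀ (ρ ρ' : Measure E) [IsFiniteMeasure ρ] [IsFiniteMeasure ρ'],
      ∫ x, (charFun ρ x).re ∂ρ' = (∫ x, charFun ρ x ∂ρ').re := fun ρ ρ' _ _ =>
    integral_re integrable_charFun
  calc mutualEnergy (fun u v => (charFun γ (u - v)).re) α β
      = ∫ x, (charFun γ x).re ∂(α ∗ β.map fun x => -x) := by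
        rw [integral_conv hint]
        refine integral_congr_ae (ae_of_all _ fun u => ?_)
        simp only [kernelPotential, sub_eq_add_neg]
        exact ((MeasurableEquiv.neg E).measurableEmbedding.integral_map
          fun v => (charFun γ (u + v)).re).symm
    _ = ∫ t, (charFun (α ∗ β.map fun x => -x) t).re ∂γ := by rw [hre, integral_charFun_comm, hre]
    _ = ∫ t, (charFun α t * star (charFun β t)).re ∂γ := by simp only [charFun_conv_map_neg]

lemma energyDistSq_re_charFun_sub (γ α β : Measure E) [IsFiniteMeasure γ] [IsFiniteMeasure α]
    [IsFiniteMeasure β] :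
    energyDistSq (fun u v => (charFun γ (u - v)).re) α β =
      ∫ t, ‖charFun α t - charFun β t‖ ^ 2 ∂γ := by
  have hint : ∀ (ρ ρ' : Measure E) [IsFiniteMeasure ρ] [IsFiniteMeasure ρ'],
      Integrable (fun t => (charFun ρ t * star (charFun ρ' t)).re) γ := fun ρ ρ' _ _ => by
    simp only [← charFun_conv_map_neg]
    exact integrable_charFun.re
  simp only [energyDistSq, mutualEnergy_re_charFun_sub]
  have hint_sub : Integrable (fun t => (charFun α t * star (charFun α t)).re -
      2 * (charFun α t * star (charFun β t)).re) γ := (hint α α).sub ((hint α β).const_mul 2)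
  rw [← integral_const_mul, ← integral_sub (hint α α) ((hint α β).const_mul 2),
    ← integral_add hint_sub (hint β β)]
  refine integral_congr_ae (ae_of_all _ fun t => ?_)
  simp only [Complex.sq_norm, Complex.normSq_sub]
  simp only [RCLike.star_def, Complex.mul_re, Complex.conj_re, Complex.conj_im, mul_neg,
    sub_neg_eq_add, Complex.normSq_apply]
  ring

theorem isStrictlyPosDefKernel_re_charFun_sub [CompleteSpace E] (γ : Measure E)
    [IsFiniteMeasure γ] [γ.IsOpenPosMeasure] :
    IsStrictlyPosDefKernel fun u v => (charFun γ (u - v)).re := by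
  intro α β _ _
  rw [energyDistSq_re_charFun_sub]
  refine ⟨integral_nonneg fun t => sq_nonneg _, fun hzero => Measure.ext_of_charFun ?_⟩
  have hcont : Continuous fun t => ‖charFun α t - charFun β t‖ ^ 2 :=
    (continuous_charFun.sub continuous_charFun).norm.pow 2
  have hint : Integrable (fun t => ‖charFun α t - charFun β t‖ ^ 2) γ := by
    refine .of_bound hcont.aestronglyMeasurable ((α.real Set.univ + β.real Set.univ) ^ 2)
      (ae_of_all _ fun t => ?_)
    rw [norm_pow, norm_norm]
    gcongr
    exact (norm_sub_le _ _).trans (add_le_add (norm_charFun_le t) (norm_charFun_le t))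
  have hae := (integral_eq_zero_iff_of_nonneg (fun t => sq_nonneg _) hint).mp hzero
  funext t
  simpa [sub_eq_zero] using congrFun ((hcont.ae_eq_iff_eq γ continuous_zero).mp hae) t

end CharacteristicFunctions

section Sphere

open ProbabilityTheory
open scoped Pointwise

variable {E : Type*} [NormedAddCommGroup E] [InnerProductSpace ℝ E]

/-- The kernel `(u, v) ↦ e^{u·v/τ}` on the unit sphere. -/
def sphereExpKernel (τ : ℝ) (u v : sphere (0 : E) 1) : ℝ := exp (⟪(u : E), (v : E)⟫ / τ)

/-- The self-homeomorphism of the unit sphere induced by a linear isometry; used to express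
rotation invariance of measures on the sphere. -/
def sphereHomeomorph (g : E ≃ₗᵢ[ℝ] E) : sphere (0 : E) 1 ≃ₜ sphere (0 : E) 1 :=
  g.toHomeomorph.subtype fun x => by simp

lemma sphereExpKernel_sphereHomeomorph (τ : ℝ) (g : E ≃ₗᵢ[ℝ] E) (u v : sphere (0 : E) 1) :
    sphereExpKernel τ (sphereHomeomorph g u) (sphereHomeomorph g v) = sphereExpKernel τ u v :=
  congrArg (fun r => exp (r / τ)) (g.inner_map_map u v)

lemma continuous_uncurry_sphereExpKernel (τ : ℝ) :
    Continuous (Function.uncurry (sphereExpKernel (E := E) τ)) := by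
  unfold sphereExpKernel Function.uncurry
  fun_prop

lemma isPinchedKernel_sphereExpKernel [MeasurableSpace E] [BorelSpace E]
    [SecondCountableTopology E] {τ : ℝ} (hτ : 0 ≤ τ) :
    IsPinchedKernel (sphereExpKernel (E := E) τ) (exp (-1 / τ)) (exp (1 / τ)) := by
  have hinner : ∀ u v : sphere (0 : E) 1, |⟪(u : E), (v : E)⟫| ≤ 1 := fun u v => by
    simpa using abs_real_inner_le_norm (u : E) v
  refine ⟨(continuous_uncurry_sphereExpKernel τ).measurable, fun u v => ?_, exp_pos _,
    fun u v => ?_, fun u v => ?_⟩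
  · rw [sphereExpKernel, real_inner_comm, sphereExpKernel]
  · exact exp_le_exp.mpr (div_le_div_of_nonneg_right (abs_le.mp (hinner u v)).1 hτ)
  · exact exp_le_exp.mpr (div_le_div_of_nonneg_right (abs_le.mp (hinner u v)).2 hτ)

-- On the sphere `‖u - v‖² = 2 - 2 u·v`, so the exponential kernel is a Gaussian kernel up to scale.
lemma sphereExpKernel_eq_const_mul_gaussian {τ : ℝ} (hτ : 0 < τ) (u v : sphere (0 : E) 1) :
    sphereExpKernel τ u v =
      exp τ⁻¹ * exp (-‖(√τ)⁻¹ • (u : E) - (√τ)⁻¹ • (v : E)‖ ^ 2 / 2) := by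
  rw [← smul_sub, norm_smul, mul_pow, norm_sub_sq_real, norm_eq_of_mem_sphere,
    norm_eq_of_mem_sphere, norm_inv, inv_pow, norm_of_nonneg (sqrt_nonneg τ), sq_sqrt hτ.le,
    ← exp_add, sphereExpKernel]
  congr 1
  field_simp
  ring

lemma Ioo_smul_image_val_preimage_sphereHomeomorph (g : E ≃ₗᵢ[ℝ] E)
    (s : Set (sphere (0 : E) 1)) :
    Set.Ioo (0 : ℝ) 1 • (Subtype.val '' (sphereHomeomorph g ⁻¹' s)) =
      g ⁻¹' (Set.Ioo (0 : ℝ) 1 • (Subtype.val '' s)) := by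
  ext x
  constructor
  · rintro ⟨r, hr, _, ⟨u, hu, rfl⟩, rfl⟩
    exact ⟨r, hr, _, ⟨sphereHomeomorph g u, hu, rfl⟩, (g.map_smul r u).symm⟩
  · rintro ⟨r, hr, _, ⟨u, hu, rfl⟩, hx⟩
    refine ⟨r, hr, _, ⟨(sphereHomeomorph g).symm u, by simpa using hu, rfl⟩, ?_⟩
    calc r • g.symm u = g.symm (r • (u : E)) := (g.symm.map_smul r _).symm
      _ = x := by rw [g.symm_apply_eq]; exact hx

lemma kernelPotential_sphereExpKernel_eq_of_measurePreserving [MeasurableSpace E]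
    [BorelSpace E] (τ : ℝ) {σ : Measure (sphere (0 : E) 1)}
    (hσ : ∀ g, MeasurePreserving (sphereHomeomorph g) σ σ)
    (x y : sphere (0 : E) 1) :
    kernelPotential (sphereExpKernel τ) σ x = kernelPotential (sphereExpKernel τ) σ y := by
  set g := Submodule.reflection (ℝ ∙ ((x : E) - y))ᗮ
  have hg : sphereHomeomorph g x = y := Subtype.ext (Submodule.reflection_sub (by simp))
  calc kernelPotential (sphereExpKernel τ) σ x
      = ∫ v, sphereExpKernel τ (sphereHomeomorph g x) (sphereHomeomorph g v) ∂σ := by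
        simp only [sphereExpKernel_sphereHomeomorph, kernelPotential]
    _ = kernelPotential (sphereExpKernel τ) σ y := by
        rw [hg]
        exact (hσ g).integral_comp (sphereHomeomorph g).measurableEmbedding _

variable [FiniteDimensional ℝ E] [MeasurableSpace E] [BorelSpace E]

instance isOpenPosMeasure_stdGaussian : (stdGaussian E).IsOpenPosMeasure := by
  have : (gaussianReal 0 1).IsOpenPosMeasure :=
    (gaussianReal_absolutelyContinuous' 0 one_ne_zero).isOpenPosMeasure
  refine Continuous.isOpenPosMeasure_map (by fun_prop) fun x => ?_
  exact ⟨(stdOrthonormalBasis ℝ E).repr x, (stdOrthonormalBasis ℝ E).sum_repr x⟩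

theorem isStrictlyPosDefKernel_gaussian :
    IsStrictlyPosDefKernel fun u v : E => exp (-‖u - v‖ ^ 2 / 2) := by
  convert isStrictlyPosDefKernel_re_charFun_sub (stdGaussian E) using 3 with u v
  rw [charFun_stdGaussian]
  norm_cast

theorem isStrictlyPosDefKernel_sphereExpKernel {τ : ℝ} (hτ : 0 < τ) :
    IsStrictlyPosDefKernel (sphereExpKernel (E := E) τ) := by
  have hscale : MeasurableEmbedding fun u : sphere (0 : E) 1 => (√τ)⁻¹ • (u : E) :=
    (measurableEmbedding_const_smul₀ (inv_ne_zero (sqrt_ne_zero'.mpr hτ))).comp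
      (.subtype_coe isClosed_sphere.measurableSet)
  rw [funext₂ (sphereExpKernel_eq_const_mul_gaussian hτ)]
  exact (isStrictlyPosDefKernel_gaussian.comp_measurableEmbedding hscale).const_mul (exp_pos _)

lemma measurePreserving_sphereHomeomorph_toSphere (g : E ≃ₗᵢ[ℝ] E) :
    MeasurePreserving (sphereHomeomorph g) (volume : Measure E).toSphere
      (volume : Measure E).toSphere := by
  have hmeas := (sphereHomeomorph g).continuous.measurable
  refine ⟨hmeas, Measure.ext fun s hs => ?_⟩
  rw [Measure.map_apply hmeas hs, Measure.toSphere_apply' _ (hmeas hs),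
    Measure.toSphere_apply' _ hs, Ioo_smul_image_val_preimage_sphereHomeomorph,
    g.measurePreserving.measure_preimage_emb g.toHomeomorph.measurableEmbedding]

lemma measurePreserving_sphereHomeomorph_unifSphere {n : ℕ} (g : Euc n ≃ₗᵢ[ℝ] Euc n) :
    MeasurePreserving (sphereHomeomorph g) (unifSphere n) (unifSphere n) :=
  (measurePreserving_sphereHomeomorph_toSphere g).smul_measure _

instance isProbabilityMeasure_unifSphere (d : ℕ) :
    IsProbabilityMeasure (unifSphere (d + 1)) where
  measure_univ := by
    rw [unifSphere, Measure.smul_apply, smul_eq_mul]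
    exact ENNReal.inv_mul_cancel
      (Measure.measure_univ_eq_zero.not.mpr (Measure.toSphere_ne_zero _)) (measure_ne_top _ _)

end Sphere

/-- For `d ≥ 1` and `τ > 0`, the uniform measure `σ_d` is the unique Borel
probability measure on `S^d` minimizing `μ ↦ ∫ log(∫ e^{u·v/τ} dμ(v)) dμ(u)`. -/
theorem uniform_unique_logPotFunctional_minimizer (d : ℕ) (hd : 1 ≤ d) (τ : ℝ) (hτ : 0 < τ)
    (μ : Measure (Sph (d + 1))) [IsProbabilityMeasure μ] :
    logPotFunctional τ (unifSphere (d + 1)) ≤ logPotFunctional τ μ ∧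
      (logPotFunctional τ μ = logPotFunctional τ (unifSphere (d + 1)) ↔
        μ = unifSphere (d + 1)) := by
  obtain ⟨x⟩ : Nonempty (Sph (d + 1)) := (unifSphere (d + 1)).nonempty_of_neZero
  set c := kernelPotential (sphereExpKernel τ) (unifSphere (d + 1)) x
  have hpinched := isPinchedKernel_sphereExpKernel (E := Euc (d + 1)) hτ.le
  have hposdef := isStrictlyPosDefKernel_sphereExpKernel (E := Euc (d + 1)) hτ
  have hconst : ∀ u, kernelPotential (sphereExpKernel τ) (unifSphere (d + 1)) u = c := fun u =>
    kernelPotential_sphereExpKernel_eq_of_measurePreserving τ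
      measurePreserving_sphereHomeomorph_unifSphere u x
  have hfunctional : ∀ ν : Measure (Sph (d + 1)),
      logPotFunctional τ ν = ∫ u, log (kernelPotential (sphereExpKernel τ) ν u) ∂ν := fun _ => rfl
  have hvalue : logPotFunctional τ (unifSphere (d + 1)) = log c := by
    simp [hfunctional, hconst]
  rw [hvalue, hfunctional]
  exact ⟨hpinched.log_le_integral_log_kernelPotential μ hposdef hconst,
    hpinched.eq_of_integral_log_kernelPotential_eq μ hposdef hconst,
    fun hμ => by rw [← hvalue, hμ, hfunctional]⟩
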